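/- Let H be a Hopf algebra over a field k, suppose r ∈ H satisfies the 1-dimensional partial comodule equations, and set e := r·S(r). Then e² = e and e·e_{(1)} ⊗ e_{(2)} = e ⊗ e = e_{(1)}·e ⊗ e_{(2)} in H ⊗ H. -/

import Mathlib

open TensorProduct

/-- The five 1-dimensional partial comodule equations for an element `r` of a Hopf
algebra `H`: `ε(r) = 1`; `r ⊗ r·S(r) = r₍₁₎ ⊗ r₍₂₎·S(r)`; `r·S(r₍₁₎) ⊗ r₍₂₎ = r·S(r) ⊗ r`;
`r ⊗ S(r)·r = r₍₁₎ ⊗ S(r₍₂₎)·r`; `S(r)·r ⊗ r = S(r)·r₍₁₎ ⊗ r₍₂₎`. -/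
def OneDimPCM (k : Type*) {H : Type*} [Field k] [Ring H] [HopfAlgebra k H] (r : H) : Prop :=
  Coalgebra.counit (R := k) r = 1
  ∧ r ⊗ₜ[k] (r * HopfAlgebra.antipode (R := k) r)
      = Coalgebra.comul (R := k) r * ((1 : H) ⊗ₜ[k] HopfAlgebra.antipode (R := k) r)
  ∧ (r ⊗ₜ[k] (1 : H)) *
        (LinearMap.rTensor H (HopfAlgebra.antipode (R := k)) (Coalgebra.comul (R := k) r))
      = (r * HopfAlgebra.antipode (R := k) r) ⊗ₜ[k] r
  ∧ r ⊗ₜ[k] (HopfAlgebra.antipode (R := k) r * r)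
      = (LinearMap.lTensor H (HopfAlgebra.antipode (R := k)) (Coalgebra.comul (R := k) r))
          * ((1 : H) ⊗ₜ[k] r)
  ∧ (HopfAlgebra.antipode (R := k) r * r) ⊗ₜ[k] r
      = ((HopfAlgebra.antipode (R := k) r) ⊗ₜ[k] (1 : H)) * Coalgebra.comul (R := k) r

section helpers
open Coalgebra HopfAlgebra WithConv LinearMap

variable {k H : Type*} [Field k] [Ring H] [HopfAlgebra k H]

lemma aux_id_S : (toConv (LinearMap.id : H →ₗ[k] H)) * toConv (antipode k) = 1 := by
  ext x
  simpa [LinearMap.convMul_def, LinearMap.lTensor] using mul_antipode_lTensor_comul_apply (R := k) x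

lemma aux_S_id : toConv (antipode k) * (toConv (LinearMap.id : H →ₗ[k] H)) = 1 := by
  ext x
  simpa [LinearMap.convMul_def, LinearMap.rTensor] using mul_antipode_rTensor_comul_apply (R := k) x

lemma aux_alg {B : Type*} [Ring B] [Algebra k B] (h : H →ₐ[k] B) (f g : H →ₗ[k] H)
    (hfg : toConv f * toConv g = 1) :
    toConv (h.toLinearMap ∘ₗ f) * toConv (h.toLinearMap ∘ₗ g) = 1 := by
  have := LinearMap.algHom_comp_convMul_distrib h (toConv f) (toConv g)
  rw [hfg] at this
  ext x
  have h2 := LinearMap.congr_fun this x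
  simp at h2
  simpa using h2.symm

lemma comul_antipode' (x : H) : comul (R := k) (antipode k x) =
    TensorProduct.map (antipode k) (antipode k) (TensorProduct.comm k H H (comul (R := k) x)) := by
  let L : H →ₐ[k] H ⊗[k] H := Algebra.TensorProduct.includeLeft
  let R : H →ₐ[k] H ⊗[k] H := Algebra.TensorProduct.includeRight
  let S : H →ₗ[k] H := antipode k
  let D : H →ₐ[k] H ⊗[k] H := Bialgebra.comulAlgHom k H
  let N : H →ₗ[k] H ⊗[k] H :=
    TensorProduct.map S S ∘ₗ (TensorProduct.comm k H H).toLinearMap ∘ₗ comul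
  have h1 : toConv (D.toLinearMap ∘ₗ S) * toConv (D.toLinearMap ∘ₗ LinearMap.id) = 1 :=
    aux_alg D _ _ aux_S_id
  have hD : toConv (D.toLinearMap ∘ₗ LinearMap.id) =
      toConv (L.toLinearMap ∘ₗ LinearMap.id) * toConv (R.toLinearMap ∘ₗ LinearMap.id) := by
    ext x
    rw [(ℛ k x).convMul_apply]
    simp [D, L, R, (ℛ k x).eq]
  have hN : toConv N = toConv (R.toLinearMap ∘ₗ S) * toConv (L.toLinearMap ∘ₗ S) := by
    ext x
    rw [(ℛ k x).convMul_apply]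
    simp only [N, ofConv_toConv, LinearMap.comp_apply]
    conv_lhs => rw [← (ℛ k x).eq]
    simp [L, R, map_sum]
  have h2 : toConv (D.toLinearMap ∘ₗ LinearMap.id) * toConv N = 1 := by
    rw [hD, hN, mul_assoc, ← mul_assoc (toConv (R.toLinearMap ∘ₗ LinearMap.id)),
      aux_alg R _ _ aux_id_S, one_mul, aux_alg L _ _ aux_id_S]
  have h3 := left_inv_eq_right_inv h1 h2
  exact congr(ofConv $h3 x)

end helpers

/-- if `r ∈ H` satisfies the 1-dimensional partial comodule equations and
`e := r·S(r)`, then `e² = e` and `e·e₍₁₎ ⊗ e₍₂₎ = e ⊗ e = e₍₁₎·e ⊗ e₍₂₎`. -/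
theorem stmt11 (k H : Type*) [Field k] [Ring H] [HopfAlgebra k H]
    (r : H) (hr : OneDimPCM k r)
    (e : H) (he : e = r * HopfAlgebra.antipode (R := k) r) :
    e * e = e
    ∧ (e ⊗ₜ[k] (1 : H)) * Coalgebra.comul (R := k) e = e ⊗ₜ[k] e
    ∧ Coalgebra.comul (R := k) e * (e ⊗ₜ[k] (1 : H)) = e ⊗ₜ[k] e := by
  obtain ⟨h1, h2, h3, h4, h5⟩ := hr
  set s := HopfAlgebra.antipode k r with hs
  have hrsr : r * s * r = r := by
    have := congrArg (LinearMap.mul' k H) h3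
    have key : ∀ t : H ⊗[k] H, LinearMap.mul' k H ((r ⊗ₜ[k] (1 : H)) * t)
        = r * LinearMap.mul' k H t := by
      intro t
      induction t with
      | zero => simp
      | tmul a b => simp [mul_assoc]
      | add a b ha hb => simp only [mul_add, map_add, ha, hb]
    rw [key, HopfAlgebra.mul_antipode_rTensor_comul_apply, h1] at this
    simpa using this.symm
  have hds : Coalgebra.comul (R := k) s = TensorProduct.map (HopfAlgebra.antipode k)
      (HopfAlgebra.antipode k) (TensorProduct.comm k H H (Coalgebra.comul (R := k) r)) :=
    comul_antipode' r
  have hA : ((1 : H) ⊗ₜ[k] r) * Coalgebra.comul (R := k) s = s ⊗ₜ[k] (r * s) := by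
    have := congrArg (fun t => TensorProduct.comm k H H
      (LinearMap.lTensor H (HopfAlgebra.antipode k) t)) h3
    simp only [LinearMap.lTensor_tmul, TensorProduct.comm_tmul] at this
    rw [← hs] at this
    rw [← this, hds]
    generalize Coalgebra.comul (R := k) r = t
    induction t with
    | zero => simp
    | tmul a b => simp
    | add a b ha hb => simp only [mul_add, map_add, ha, hb]
  have hB : Coalgebra.comul (R := k) s * (r ⊗ₜ[k] (1 : H)) = (s * r) ⊗ₜ[k] s := by
    have := congrArg (fun t => TensorProduct.comm k H H
      (LinearMap.rTensor H (HopfAlgebra.antipode k) t)) h4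
    simp only [LinearMap.rTensor_tmul, TensorProduct.comm_tmul] at this
    rw [← hs] at this
    rw [this, hds]
    generalize Coalgebra.comul (R := k) r = t
    induction t with
    | zero => simp
    | tmul a b => simp
    | add a b ha hb => simp only [add_mul, map_add, ha, hb]
  have hde : Coalgebra.comul (R := k) e = Coalgebra.comul (R := k) r * Coalgebra.comul (R := k) s := by
    rw [he, Bialgebra.comul_mul]
  refine ⟨?_, ?_, ?_⟩
  · rw [he, ← mul_assoc, hrsr]
  · calc (e ⊗ₜ[k] (1 : H)) * Coalgebra.comul (R := k) e
        = (r ⊗ₜ[k] (1 : H)) * ((s ⊗ₜ[k] (1 : H)) * Coalgebra.comul (R := k) r)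
          * Coalgebra.comul (R := k) s := by
          rw [hde, he, ← mul_assoc, ← mul_assoc]; simp
      _ = (r ⊗ₜ[k] (1 : H)) * (((1 : H) ⊗ₜ[k] r) * Coalgebra.comul (R := k) s) := by
          rw [← h5, ← mul_assoc]; simp [← mul_assoc, hrsr]
      _ = e ⊗ₜ[k] e := by rw [hA, he]; simp
  · calc Coalgebra.comul (R := k) e * (e ⊗ₜ[k] (1 : H))
        = Coalgebra.comul (R := k) r * (Coalgebra.comul (R := k) s * (r ⊗ₜ[k] (1 : H)))
          * (s ⊗ₜ[k] (1 : H)) := by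
          rw [hde, he]; simp [mul_assoc]
      _ = (Coalgebra.comul (R := k) r * ((1 : H) ⊗ₜ[k] s)) * ((s * r * s) ⊗ₜ[k] (1 : H)) := by
          rw [hB]; simp [mul_assoc]
      _ = e ⊗ₜ[k] e := by
          rw [← h2, he]; simp [← mul_assoc, hrsr]
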